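/- Let $K$ be a field and $n \geq 4$ with $n \equiv 1 \pmod 3$. Then $\beta_{(2n+1)/3,\, n}(R/I(C_n)) = 1$, and the projective dimension of $R/I(C_n)$ equals $\frac{2n+1}{3}$. -/

import Mathlib

open MvPolynomial

/-- The edge ideal `I(Cₙ)` of the `n`-cycle, vertices indexed by `ZMod n`. -/
noncomputable def cycleIdeal (K : Type) [Field K] (n : ℕ) :
    Ideal (MvPolynomial (ZMod n) K) :=
  Ideal.span (Set.range fun i : ZMod n => X i * X (i + 1))

/-- The graded free module `⨁ⱼ R(-j)^(b j)` over `R = K[x₁,…,xₙ]`: the free module on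
the index set `Σ j, Fin (b j)`, a generator with first component `j` being thought of as
having degree `j`. -/
abbrev GradedFreeMod (K : Type) [Field K] (n : ℕ) (b : ℕ → ℕ) : Type :=
  (Σ j : ℕ, Fin (b j)) →₀ MvPolynomial (ZMod n) K

/-- An element of `⨁ⱼ R(-j)^(b j)` is homogeneous of degree `d` if its coordinate at
each generator of degree `j` is a homogeneous polynomial of degree `d - j` (and vanishes
if `j > d`). -/
def IsHomogElem {K : Type} [Field K] {n : ℕ} {b : ℕ → ℕ} (d : ℕ)
    (f : GradedFreeMod K n b) : Prop :=
  ∀ s : Σ j : ℕ, Fin (b j),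
    MvPolynomial.IsHomogeneous (f s) (d - s.1) ∧ (f s ≠ 0 → s.1 ≤ d)

/-- A linear map of graded free modules is graded (of degree `0`) if it preserves
homogeneous elements and their degrees. -/
def IsGradedMap {K : Type} [Field K] {n : ℕ} {b b' : ℕ → ℕ}
    (φ : GradedFreeMod K n b →ₗ[MvPolynomial (ZMod n) K] GradedFreeMod K n b') : Prop :=
  ∀ d f, IsHomogElem d f → IsHomogElem d (φ f)

/-- The irrelevant maximal ideal `(x₁,…,xₙ)`. -/
noncomputable def irrelevantIdeal (K : Type) [Field K] (n : ℕ) :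
    Ideal (MvPolynomial (ZMod n) K) :=
  Ideal.span (Set.range (X : ZMod n → MvPolynomial (ZMod n) K))

/-- A minimal graded free resolution of `R/I` with graded Betti numbers `β i j`:
an exact sequence `⋯ → F₁ → F₀ → R/I → 0` of graded free modules `Fᵢ = ⨁ⱼ R(-j)^(β i j)`
with degree‑zero graded differentials whose images lie in `m·Fᵢ`, where `m = (x₁,…,xₙ)`.
The graded Betti numbers `β_{i,j}(R/I) = dim_K Tor_i(R/I, K)_j` may be read off any such
resolution. -/
structure MinimalGradedFreeResolution (K : Type) [Field K] (n : ℕ)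
    (I : Ideal (MvPolynomial (ZMod n) K)) (β : ℕ → ℕ → ℕ) : Type where
  /-- the differentials of the resolution -/
  d : ∀ i : ℕ, GradedFreeMod K n (β (i + 1)) →ₗ[MvPolynomial (ZMod n) K]
    GradedFreeMod K n (β i)
  /-- the augmentation `F₀ → R/I` -/
  aug : GradedFreeMod K n (β 0) →ₗ[MvPolynomial (ZMod n) K] (MvPolynomial (ZMod n) K ⧸ I)
  aug_surjective : Function.Surjective aug
  exact_at_zero : LinearMap.ker aug = LinearMap.range (d 0)
  exact : ∀ i : ℕ, LinearMap.ker (d i) = LinearMap.range (d (i + 1))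
  graded : ∀ i : ℕ, IsGradedMap (d i)
  aug_graded : ∀ (dd : ℕ) (f : GradedFreeMod K n (β 0)), IsHomogElem dd f →
    ∃ p : MvPolynomial (ZMod n) K, p.IsHomogeneous dd ∧ aug f = Ideal.Quotient.mk I p
  minimal : ∀ i : ℕ, LinearMap.range (d i) ≤
    irrelevantIdeal K n • (⊤ : Submodule (MvPolynomial (ZMod n) K) (GradedFreeMod K n (β i)))

/-- Projective dimension of an `R`-module `M`, characterized via vanishing of the
`Ext` functors: the least `d` such that `Ext^i(M, N) = 0` for all `i > d` and all `N`. -/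
noncomputable def projDim (R : Type) [CommRing R] (M : Type) [AddCommGroup M]
    [Module R M] : ℕ∞ :=
  sInf {d : ℕ∞ | ∀ i : ℕ, d < i → ∀ N : ModuleCat R,
    Subsingleton (((Ext R (ModuleCat R) i).obj (Opposite.op (ModuleCat.of R M))).obj N)}

/-!
A functor from the category of monomials to `K`-modules is a graded `K[σ]`-module, so graded `Ext`
groups are available in this functor category. If `F` is a minimal graded free resolution of
`R ⧸ I`, every map `Fᵢ → K(-j)` vanishes on `𝔪 Fᵢ`, hence on the next syzygy module, and dimension
shifting gives `dim Extⁱ(R ⧸ I, K(-j)) = β i j`. By minimality again, the ungraded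
`Extⁱ(R ⧸ I, K)` is nonzero as soon as `Fᵢ` is, so the length of `F` is the projective dimension.

For a monomial ideal `J` and a monomial `m` of degree `d`, the sequence
`0 → (R ⧸ (J : m))(-d) → R ⧸ J → R ⧸ (J + (m)) → 0` controls the Betti numbers of the third term.
Adding the edges of a path one at a time, the colon ideals are edge ideals of shorter paths plus one
variable, which confines the Betti numbers of the path on `3k + 4` vertices to a region missing the
degree `3k + 4`. The last edge closes the cycle; its colon ideal is the edge ideal of the path on
`3k` vertices plus two variables, and the top Betti number of the latter, in position `2k + 2` and
degree `3k + 2`, becomes the one of the cycle in position `2k + 3` and degree `3k + 4`.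
-/

open CategoryTheory

universe u

section FunctorCategory

variable {C D : Type*} [Category* C] [Category* D] [Abelian D] {S : ShortComplex (C ⥤ D)}

lemma exact_of_forall_evaluation (hS : ∀ c, (S.map ((evaluation C D).obj c)).Exact) :
    S.Exact := by
  rw [ShortComplex.exact_iff_isZero_homology, Functor.isZero_iff]
  exact fun c => ((ShortComplex.exact_iff_isZero_homology _).1 (hS c)).of_iso
    (S.mapHomologyIso ((evaluation C D).obj c)).symm

lemma shortExact_of_forall_evaluation
    (hS : ∀ c, (S.map ((evaluation C D).obj c)).ShortExact) : S.ShortExact where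
  exact := exact_of_forall_evaluation fun c => (hS c).exact
  mono_f := (NatTrans.mono_iff_mono_app S.f).2 fun c => (hS c).mono_f
  epi_g := (NatTrans.epi_iff_epi_app S.g).2 fun c => (hS c).epi_g

end FunctorCategory

section GradedModules

/-- The category of degrees: a morphism `a ⟶ b` is a monomial of degree `b - a` in the variables
`σ`. Functors from it to `K`-modules are the `ℕ`-graded modules over `K[σ]`. -/
structure MonomialCat (σ : Type u) where
  deg : ℕ

noncomputable instance (σ : Type u) : Category.{u} (MonomialCat σ) where
  Hom a b := {u : σ →₀ ℕ // a.deg + u.degree = b.deg}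
  id a := ⟨0, by simp⟩
  comp u v := ⟨u.1 + v.1, by rw [map_add, ← add_assoc, u.2, v.2]⟩
  id_comp u := Subtype.ext (zero_add _)
  comp_id u := Subtype.ext (add_zero _)
  assoc u v w := Subtype.ext (add_assoc _ _ _)

variable {σ K : Type u} [CommRing K]

/-- A grading of a `K[σ]`-module `M`: a family of `K`-submodules such that a monomial of degree `d`
raises degrees by `d`. The pieces are not required to be independent or to span `M`. -/
structure MonomialGrading (σ K M : Type u) [CommRing K] [AddCommGroup M] [Module K M]
    [Module (MvPolynomial σ K) M] where
  piece : ℕ → Submodule K M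
  smul_mem : ∀ {a b : ℕ} (u : σ →₀ ℕ) {x : M}, x ∈ piece a → a + u.degree = b →
    monomial u (1 : K) • x ∈ piece b

namespace MonomialGrading

variable {M N P : Type u} [AddCommGroup M] [Module K M] [Module (MvPolynomial σ K) M]
  [IsScalarTower K (MvPolynomial σ K) M]
  [AddCommGroup N] [Module K N] [Module (MvPolynomial σ K) N]
  [IsScalarTower K (MvPolynomial σ K) N]
  [AddCommGroup P] [Module K P] [Module (MvPolynomial σ K) P]
  [IsScalarTower K (MvPolynomial σ K) P]

/-- A graded module, as a functor on the category of degrees. -/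
noncomputable def functor (G : MonomialGrading σ K M) : MonomialCat σ ⥤ ModuleCat.{u} K where
  obj a := ModuleCat.of K (G.piece a.deg)
  map {a b} u := ModuleCat.ofHom <|
    (LinearMap.lsmul (MvPolynomial σ K) M (monomial u.1 1)).restrictScalars K |>.restrict
      fun _ hx => G.smul_mem u.1 hx u.2
  map_id a := by
    ext x
    exact one_smul _ x.1
  map_comp u v := by
    ext x
    change monomial (u.1 + v.1) (1 : K) • x.1 = monomial v.1 (1 : K) • monomial u.1 (1 : K) • x.1
    rw [smul_smul, monomial_mul, one_mul, add_comm]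

/-- A linear map of graded modules that preserves degrees. -/
def IsGradedHom (G : MonomialGrading σ K M) (H : MonomialGrading σ K N)
    (φ : M →ₗ[MvPolynomial σ K] N) : Prop :=
  ∀ ⦃b x⦄, x ∈ G.piece b → φ x ∈ H.piece b

variable {G : MonomialGrading σ K M} {H : MonomialGrading σ K N} {L : MonomialGrading σ K P}
  {φ : M →ₗ[MvPolynomial σ K] N} {ψ : N →ₗ[MvPolynomial σ K] P}

/-- The natural transformation induced by a degree preserving linear map. -/
noncomputable def map (hφ : G.IsGradedHom H φ) : G.functor ⟶ H.functor where
  app _ := ModuleCat.ofHom ((φ.restrictScalars K).restrict fun _ hx => hφ hx)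
  naturality _ _ _ := by
    ext x
    exact Subtype.ext (map_smul φ _ _)

/-- The short complex of functors given by two composable degree preserving linear maps. -/
noncomputable abbrev shortComplex (hφ : G.IsGradedHom H φ) (hψ : H.IsGradedHom L ψ)
    (w : ∀ ⦃b x⦄, x ∈ G.piece b → ψ (φ x) = 0) :
    ShortComplex (MonomialCat σ ⥤ ModuleCat.{u} K) where
  f := map hφ
  g := map hψ
  zero := by
    ext b x
    exact Subtype.ext (w x.2)

lemma shortExact_shortComplex (hφ : G.IsGradedHom H φ) (hψ : H.IsGradedHom L ψ)
    (w : ∀ ⦃b x⦄, x ∈ G.piece b → ψ (φ x) = 0)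
    (injective : ∀ b, ∀ x ∈ G.piece b, φ x = 0 → x = 0)
    (exact : ∀ b, ∀ y ∈ H.piece b, ψ y = 0 → ∃ x ∈ G.piece b, φ x = y)
    (surjective : ∀ b, ∀ z ∈ L.piece b, ∃ y ∈ H.piece b, ψ y = z) :
    (shortComplex hφ hψ w).ShortExact := by
  refine shortExact_of_forall_evaluation fun b =>
    { exact := (ShortComplex.moduleCat_exact_iff _).2 ?_
      mono_f := (ModuleCat.mono_iff_injective _).2 ((injective_iff_map_eq_zero _).2 ?_)
      epi_g := (ModuleCat.epi_iff_surjective _).2 ?_ }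
  · rintro ⟨y, hy⟩ hψy
    obtain ⟨x, hx, hxy⟩ := exact b.deg y hy (congrArg Subtype.val hψy)
    exact ⟨⟨x, hx⟩, Subtype.ext hxy⟩
  · rintro ⟨x, hx⟩ hφx
    exact Subtype.ext (injective b.deg x hx (congrArg Subtype.val hφx))
  · rintro ⟨z, hz⟩
    obtain ⟨y, hy, hyz⟩ := surjective b.deg z hz
    exact ⟨⟨y, hy⟩, Subtype.ext hyz⟩

end MonomialGrading

end GradedModules

section MonomialQuotients

variable {σ K : Type u} [CommRing K]

variable (σ K) in
/-- The polynomials which are homogeneous of degree `b` when `1` is given degree `a`. -/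
noncomputable def shiftedPiece (a b : ℕ) : Submodule K (MvPolynomial σ K) :=
  restrictSupport K {u | a + u.degree = b}

lemma mem_shiftedPiece {a b : ℕ} {p : MvPolynomial σ K} :
    p ∈ shiftedPiece σ K a b ↔ ∀ u, coeff u p ≠ 0 → a + u.degree = b := by
  simp [shiftedPiece, mem_restrictSupport_iff, Set.subset_def]

lemma shiftedPiece_add_right (a b d : ℕ) :
    shiftedPiece σ K (a + d) (b + d) = shiftedPiece σ K a b := by
  simp only [shiftedPiece, add_right_comm a d, add_left_inj]

lemma monomial_mul_mem_shiftedPiece {a b : ℕ} (m : σ →₀ ℕ) {p : MvPolynomial σ K}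
    (hp : p ∈ shiftedPiece σ K (a + m.degree) b) : monomial m 1 * p ∈ shiftedPiece σ K a b := by
  rw [mem_shiftedPiece] at hp ⊢
  intro u hu
  rw [coeff_monomial_mul'] at hu
  split_ifs at hu with hmu
  · rw [← hp _ (by simpa using hu), add_assoc, ← map_add, add_tsub_cancel_of_le hmu]
  · exact absurd rfl hu

lemma divMonomial_mem_shiftedPiece {a b : ℕ} (m : σ →₀ ℕ) {p : MvPolynomial σ K}
    (hp : p ∈ shiftedPiece σ K a b) : p.divMonomial m ∈ shiftedPiece σ K (a + m.degree) b := by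
  rw [mem_shiftedPiece] at hp ⊢
  intro u hu
  rw [coeff_divMonomial] at hu
  rw [← hp _ hu, map_add, add_assoc]

/-- The grading of `(K[σ] ⧸ J)(-a)`. -/
noncomputable def quotientGrading (J : Ideal (MvPolynomial σ K)) (a : ℕ) :
    MonomialGrading σ K (MvPolynomial σ K ⧸ J) where
  piece b := (shiftedPiece σ K a b).map (Ideal.Quotient.mkₐ K J).toLinearMap
  smul_mem := by
    rintro b _ m _ ⟨p, hp, rfl⟩ rfl
    refine ⟨monomial m 1 * p, monomial_mul_mem_shiftedPiece m ?_, rfl⟩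
    rwa [SetLike.mem_coe, ← shiftedPiece_add_right _ _ m.degree] at hp

variable (K) in
/-- The ideal spanned by the monomials with exponent in an upper set. -/
noncomputable abbrev monomialIdeal (U : UpperSet (σ →₀ ℕ)) : Ideal (MvPolynomial σ K) :=
  restrictSupportIdeal K (U : Set (σ →₀ ℕ)) U.upper

lemma mem_monomialIdeal {U : UpperSet (σ →₀ ℕ)} {p : MvPolynomial σ K} :
    p ∈ monomialIdeal K U ↔ ∀ u, coeff u p ≠ 0 → u ∈ U := by
  change p ∈ restrictSupport K (U : Set (σ →₀ ℕ)) ↔ _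
  simp [mem_restrictSupport_iff, Set.subset_def]

variable (K) in
/-- The functor of `(K[σ] ⧸ J)(-a)`, where `J` is spanned by the monomials with exponent in `U`. -/
noncomputable abbrev monomialQuotient (U : UpperSet (σ →₀ ℕ)) (a : ℕ) :
    MonomialCat σ ⥤ ModuleCat.{u} K :=
  (quotientGrading (monomialIdeal K U) a).functor

/-- The exponents of the monomials in the colon ideal `J : m`, where `J` is spanned by the monomials
with exponent in `U`. -/
def colonExponents (U : UpperSet (σ →₀ ℕ)) (m : σ →₀ ℕ) : UpperSet (σ →₀ ℕ) where
  carrier := {u | m + u ∈ U}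
  upper' _ _ huv hu := U.upper (add_le_add_right huv m) hu

lemma mem_colonExponents {U : UpperSet (σ →₀ ℕ)} {m u : σ →₀ ℕ} :
    u ∈ colonExponents U m ↔ m + u ∈ U := Iff.rfl

variable {U : UpperSet (σ →₀ ℕ)} {m : σ →₀ ℕ} {a : ℕ}

lemma monomial_mul_mem_monomialIdeal {p : MvPolynomial σ K} :
    monomial m 1 * p ∈ monomialIdeal K U ↔ p ∈ monomialIdeal K (colonExponents U m) := by
  simp only [mem_monomialIdeal, mem_colonExponents]
  refine ⟨fun h u hu => h _ (by simpa using hu), fun h u hu => ?_⟩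
  rw [coeff_monomial_mul'] at hu
  split_ifs at hu with hmu
  · simpa only [add_tsub_cancel_of_le hmu] using h (u - m) (by simpa using hu)
  · exact absurd rfl hu

lemma monomial_mul_mem_monomialIdeal_Ici (p : MvPolynomial σ K) :
    monomial m 1 * p ∈ monomialIdeal K (U ⊓ UpperSet.Ici m) := by
  refine mem_monomialIdeal.2 fun u hu => Or.inr (show m ≤ u from not_not.1 fun hmu => hu ?_)
  rw [coeff_monomial_mul', if_neg hmu]

lemma modMonomial_mem_monomialIdeal {p : MvPolynomial σ K}
    (hp : p ∈ monomialIdeal K (U ⊓ UpperSet.Ici m)) : p.modMonomial m ∈ monomialIdeal K U := by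
  rw [mem_monomialIdeal] at hp ⊢
  intro u hu
  by_cases hmu : m ≤ u
  · exact absurd (coeff_modMonomial_of_le _ hmu) hu
  · rw [coeff_modMonomial_of_not_le _ hmu] at hu
    exact (hp u hu).resolve_right hmu

variable (K U m) in
/-- Multiplication by the monomial `m`, as a map `K[σ] ⧸ (J : m) → K[σ] ⧸ J`. -/
noncomputable def mulMonomial :
    (MvPolynomial σ K ⧸ monomialIdeal K (colonExponents U m)) →ₗ[MvPolynomial σ K]
      MvPolynomial σ K ⧸ monomialIdeal K U :=
  Submodule.mapQ _ _ (LinearMap.mulLeft _ (monomial m 1)) fun _ =>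
    monomial_mul_mem_monomialIdeal.2

variable (K U m) in
/-- The projection `K[σ] ⧸ J → K[σ] ⧸ (J + (m))` for a monomial `m`. The order of `UpperSet` is
reverse inclusion, so the exponents of `J + (m)` are the infimum. -/
noncomputable def projAddMonomial :
    (MvPolynomial σ K ⧸ monomialIdeal K U) →ₗ[MvPolynomial σ K]
      MvPolynomial σ K ⧸ monomialIdeal K (U ⊓ UpperSet.Ici m) :=
  Submodule.mapQ _ _ LinearMap.id fun _ hp =>
    restrictSupport_mono K (UpperSet.coe_subset_coe.2 inf_le_left) hp

lemma isGradedHom_mulMonomial :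
    (quotientGrading (monomialIdeal K (colonExponents U m)) (a + m.degree)).IsGradedHom
      (quotientGrading (monomialIdeal K U) a) (mulMonomial K U m) := by
  rintro b _ ⟨p, hp, rfl⟩
  exact ⟨monomial m 1 * p, monomial_mul_mem_shiftedPiece m hp, rfl⟩

lemma isGradedHom_projAddMonomial :
    (quotientGrading (monomialIdeal K U) a).IsGradedHom
      (quotientGrading (monomialIdeal K (U ⊓ UpperSet.Ici m)) a) (projAddMonomial K U m) := by
  rintro b _ ⟨p, hp, rfl⟩
  exact ⟨p, hp, rfl⟩

lemma projAddMonomial_mulMonomial (x : MvPolynomial σ K ⧸ monomialIdeal K (colonExponents U m)) :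
    projAddMonomial K U m (mulMonomial K U m x) = 0 := by
  obtain ⟨p, rfl⟩ := Ideal.Quotient.mk_surjective x
  exact Ideal.Quotient.eq_zero_iff_mem.2 (monomial_mul_mem_monomialIdeal_Ici p)

variable (K U m a) in
/-- The sequence `0 → (K[σ] ⧸ (J : m))(-deg m) → K[σ] ⧸ J → K[σ] ⧸ (J + (m)) → 0`, shifted
by `-a`, for a monomial ideal `J` and a monomial `m`. -/
noncomputable abbrev colonSequence : ShortComplex (MonomialCat σ ⥤ ModuleCat.{u} K) :=
  MonomialGrading.shortComplex (isGradedHom_mulMonomial (K := K) (U := U) (m := m) (a := a))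
    isGradedHom_projAddMonomial fun _ x _ => projAddMonomial_mulMonomial x

lemma shortExact_colonSequence : (colonSequence K U m a).ShortExact := by
  refine MonomialGrading.shortExact_shortComplex isGradedHom_mulMonomial
    isGradedHom_projAddMonomial _ ?_ ?_ ?_
  · rintro b _ ⟨p, -, rfl⟩ hp
    exact Ideal.Quotient.eq_zero_iff_mem.2
      (monomial_mul_mem_monomialIdeal.1 (Ideal.Quotient.eq_zero_iff_mem.1 hp))
  · rintro b _ ⟨p, hp, rfl⟩ hpm
    refine ⟨_, ⟨p.divMonomial m, divMonomial_mem_shiftedPiece m hp, rfl⟩, Eq.symm ?_⟩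
    refine Ideal.Quotient.eq.2 ?_
    rw [LinearMap.mulLeft_apply, sub_eq_of_eq_add' (divMonomial_add_modMonomial p m).symm]
    exact modMonomial_mem_monomialIdeal (Ideal.Quotient.eq_zero_iff_mem.1 hpm)
  · rintro b _ ⟨p, hp, rfl⟩
    exact ⟨_, ⟨p, hp, rfl⟩, rfl⟩

end MonomialQuotients

section FreeModules

variable {σ K ι : Type u} [CommRing K]

variable (σ K ι) in
/-- The `K`-basis of the free `K[σ]`-module on `ι` consisting of the monomials in each summand. -/
noncomputable def monomialBasis : Module.Basis (ι × (σ →₀ ℕ)) K (ι →₀ MvPolynomial σ K) :=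
  (Finsupp.basis fun _ : ι => basisMonomials σ K).reindex (Equiv.sigmaEquivProd ι (σ →₀ ℕ))

lemma monomialBasis_apply (q : ι × (σ →₀ ℕ)) :
    monomialBasis σ K ι q = Finsupp.single q.1 (monomial q.2 1) := by
  simp [monomialBasis]

lemma monomialBasis_repr (f : ι →₀ MvPolynomial σ K) (q : ι × (σ →₀ ℕ)) :
    (monomialBasis σ K ι).repr f q = coeff q.2 (f q.1) := by
  simp only [monomialBasis, Module.Basis.repr_reindex, Finsupp.mapDomain_equiv_apply,
    Finsupp.basis_repr]
  rfl

lemma monomial_smul_monomialBasis (m : σ →₀ ℕ) (q : ι × (σ →₀ ℕ)) :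
    monomial m (1 : K) • monomialBasis σ K ι q = monomialBasis σ K ι (q.1, q.2 + m) := by
  simp only [monomialBasis_apply, Finsupp.smul_single, smul_eq_mul, monomial_mul, one_mul,
    add_comm m]

/-- The monomials of degree `b` in the free module on `ι` with basis elements in degrees `deg`. -/
def monomialsOfDegree (σ : Type u) (deg : ι → ℕ) (b : ℕ) : Set (ι × (σ →₀ ℕ)) :=
  {q | deg q.1 + q.2.degree = b}

variable (σ K) in
/-- The grading of the free module with basis elements of prescribed degrees. -/
noncomputable def freeGrading (deg : ι → ℕ) : MonomialGrading σ K (ι →₀ MvPolynomial σ K) where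
  piece b := Submodule.span K (monomialBasis σ K ι '' monomialsOfDegree σ deg b)
  smul_mem {a b} m f hf h := by
    refine Submodule.span_induction ?_ ?_ ?_ ?_ hf
    · rintro _ ⟨q, hq, rfl⟩
      rw [monomial_smul_monomialBasis]
      refine Submodule.subset_span ⟨_, ?_, rfl⟩
      rw [monomialsOfDegree, Set.mem_ofPred_eq, map_add, ← add_assoc, hq, h]
    · simp
    · intro f g _ _ hf hg
      rw [smul_add]
      exact add_mem hf hg
    · intro c f _ hf
      rw [smul_comm]
      exact Submodule.smul_mem _ c hf

lemma mem_freeGrading {deg : ι → ℕ} {b : ℕ} {f : ι →₀ MvPolynomial σ K} :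
    f ∈ (freeGrading σ K deg).piece b ↔ ∀ s u, coeff u (f s) ≠ 0 → deg s + u.degree = b := by
  simp [freeGrading, Module.Basis.mem_span_image, Set.subset_def, monomialBasis_repr,
    monomialsOfDegree]

/-- The graded free `K[σ]`-module with basis elements in degrees `deg`. -/
noncomputable abbrev freeFunctor (σ K : Type u) [CommRing K] (deg : ι → ℕ) :
    MonomialCat σ ⥤ ModuleCat.{u} K :=
  (freeGrading σ K deg).functor

variable (K) in
/-- The monomial basis of a graded piece of a free module. -/
noncomputable def pieceBasis (deg : ι → ℕ) (b : MonomialCat σ) :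
    Module.Basis (monomialsOfDegree σ deg b.deg) K ((freeFunctor σ K deg).obj b) :=
  (Module.Basis.span ((monomialBasis σ K ι).linearIndependent.comp _
    Subtype.val_injective)).map (LinearEquiv.ofEq _ _ (congrArg _ (Set.image_eq_range _ _).symm))

/-- A monomial in the summand `s`, as a morphism out of the degree of the basis element `s`. -/
def monomialHom {deg : ι → ℕ} {b : MonomialCat σ} (q : monomialsOfDegree σ deg b.deg) :
    (⟨deg q.1.1⟩ : MonomialCat σ) ⟶ b :=
  ⟨q.1.2, q.2⟩

variable {deg : ι → ℕ} {b : MonomialCat σ}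

lemma val_pieceBasis (q : monomialsOfDegree σ deg b.deg) :
    Subtype.val (p := (· ∈ (freeGrading σ K deg).piece b.deg)) (pieceBasis K deg b q) =
      monomialBasis σ K ι q :=
  congrArg Subtype.val (Module.Basis.span_apply ((monomialBasis σ K ι).linearIndependent.comp _
    Subtype.val_injective) q)

lemma pieceBasis_repr (x : (freeGrading σ K deg).piece b.deg)
    (q : monomialsOfDegree σ deg b.deg) :
    (pieceBasis K deg b).repr x q = coeff q.1.2 (x.1 q.1.1) := by
  classical
  rw [← monomialBasis_repr]
  have hcoord : (pieceBasis K deg b).coord q =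
      ((monomialBasis σ K ι).coord q).domRestrict ((freeGrading σ K deg).piece b.deg) := by
    refine (pieceBasis K deg b).ext fun r => ?_
    refine Eq.trans ?_ (congrArg ((monomialBasis σ K ι).coord q) (val_pieceBasis r)).symm
    simp [Finsupp.single_apply, Subtype.ext_iff]
  exact LinearMap.congr_fun hcoord x

variable (K) in
/-- The basis element indexed by `s`. -/
noncomputable def freeGenerator (deg : ι → ℕ) (s : ι) : (freeFunctor σ K deg).obj ⟨deg s⟩ :=
  pieceBasis K deg ⟨deg s⟩ ⟨(s, 0), by simp [monomialsOfDegree]⟩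

lemma val_freeGenerator (s : ι) :
    Subtype.val (p := (· ∈ (freeGrading σ K deg).piece (deg s))) (freeGenerator K deg s) =
      monomialBasis σ K ι (s, 0) :=
  val_pieceBasis _

lemma map_freeGenerator (q : monomialsOfDegree σ deg b.deg) :
    ((freeFunctor σ K deg).map (monomialHom q)).hom (freeGenerator K deg q.1.1) =
      pieceBasis K deg b q := by
  refine Subtype.ext (Eq.trans ?_ (val_pieceBasis q).symm)
  refine (congrArg (fun f : ι →₀ MvPolynomial σ K => monomial q.1.2 (1 : K) • f)
    (val_freeGenerator q.1.1)).trans ?_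
  rw [monomial_smul_monomialBasis, zero_add]

variable {N : MonomialCat σ ⥤ ModuleCat.{u} K}

lemma app_pieceBasis (η : freeFunctor σ K deg ⟶ N) (q : monomialsOfDegree σ deg b.deg) :
    (η.app b).hom (pieceBasis K deg b q) =
      (N.map (monomialHom q)).hom ((η.app ⟨deg q.1.1⟩).hom (freeGenerator K deg q.1.1)) := by
  rw [← map_freeGenerator]
  exact congrArg (fun f => f.hom (freeGenerator K deg q.1.1)) (η.naturality (monomialHom q))

lemma freeFunctor_hom_ext {η θ : freeFunctor σ K deg ⟶ N}
    (h : ∀ s, (η.app ⟨deg s⟩).hom (freeGenerator K deg s) =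
      (θ.app ⟨deg s⟩).hom (freeGenerator K deg s)) : η = θ := by
  ext1
  ext1 b
  refine ModuleCat.hom_ext ((pieceBasis K deg b).ext fun q => ?_)
  rw [app_pieceBasis, app_pieceBasis, h]

/-- The natural transformation out of a free module determined by the images of the basis
elements. -/
noncomputable def freeDesc (y : ∀ s, N.obj ⟨deg s⟩) : freeFunctor σ K deg ⟶ N where
  app b := ModuleCat.ofHom
    ((pieceBasis K deg b).constr K fun q => (N.map (monomialHom q)).hom (y q.1.1))
  naturality a b v := by
    refine ModuleCat.hom_ext ((pieceBasis K deg a).ext fun q => ?_)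
    let shifted : monomialsOfDegree σ deg b.deg := ⟨(q.1.1, q.1.2 + v.1), ((monomialHom q) ≫ v).2⟩
    have hshifted : ((freeFunctor σ K deg).map v).hom (pieceBasis K deg a q) =
        pieceBasis K deg b shifted := by
      rw [← map_freeGenerator, ← map_freeGenerator]
      exact congrArg (fun f => f.hom (freeGenerator K deg q.1.1))
        ((freeFunctor σ K deg).map_comp (monomialHom q) v).symm
    let η := (pieceBasis K deg b).constr K fun q => (N.map (monomialHom q)).hom (y q.1.1)
    refine (congrArg η hshifted).trans (((pieceBasis K deg b).constr_basis K _ _).trans ?_)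
    refine Eq.trans ?_ (congrArg (N.map v).hom ((pieceBasis K deg a).constr_basis K _ q)).symm
    exact congrArg (fun f => f.hom (y q.1.1)) (N.map_comp (monomialHom q) v)

lemma freeDesc_app_freeGenerator (y : ∀ s, N.obj ⟨deg s⟩) (s : ι) :
    ((freeDesc y).app ⟨deg s⟩).hom (freeGenerator K deg s) = y s := by
  refine ((pieceBasis K deg ⟨deg s⟩).constr_basis K _ _).trans ?_
  exact congrArg (fun f => f.hom (y s)) (N.map_id ⟨deg s⟩)

variable (deg N) in
/-- Morphisms out of a free module are determined by the images of the basis elements. -/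
noncomputable def freeHomEquiv :
    (freeFunctor σ K deg ⟶ N) ≃ₗ[K] ∀ s, N.obj ⟨deg s⟩ where
  toFun η s := (η.app ⟨deg s⟩).hom (freeGenerator K deg s)
  map_add' _ _ := rfl
  map_smul' _ _ := rfl
  invFun y := freeDesc y
  left_inv _ := freeFunctor_hom_ext fun s => freeDesc_app_freeGenerator _ s
  right_inv y := funext fun s => freeDesc_app_freeGenerator y s

instance projective_freeFunctor (deg : ι → ℕ) :
    Projective (freeFunctor σ K deg) where
  factors {E X} f e _ := by
    have hsurj : ∀ s, ∃ y, (e.app ⟨deg s⟩).hom y = (f.app ⟨deg s⟩).hom (freeGenerator K deg s) :=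
      fun s => (ModuleCat.epi_iff_surjective _).1 inferInstance _
    choose y hy using hsurj
    refine ⟨freeDesc y, freeFunctor_hom_ext fun s => ?_⟩
    rw [← hy]
    exact congrArg (e.app ⟨deg s⟩).hom (freeDesc_app_freeGenerator y s)

lemma app_eq_zero_of_coeff_zero (η : freeFunctor σ K deg ⟶ N)
    (hN : ∀ ⦃a b : MonomialCat σ⦄ (m : a ⟶ b), m.1 ≠ 0 → N.map m = 0)
    {x : (freeGrading σ K deg).piece b.deg} (hx : ∀ s, coeff 0 (x.1 s) = 0) :
    (η.app b).hom x = 0 := by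
  rw [← (pieceBasis K deg b).linearCombination_repr x, Finsupp.linearCombination_apply,
    Finsupp.sum, map_sum]
  refine Finset.sum_eq_zero fun q _ => ?_
  rw [map_smul, app_pieceBasis, pieceBasis_repr]
  by_cases hq : q.1.2 = 0
  · rw [hq, hx, zero_smul]
  · rw [hN (monomialHom q) hq, ModuleCat.hom_zero, LinearMap.zero_apply, smul_zero]

end FreeModules

section TrivialModules

variable {σ K ι : Type u} [CommRing K]

variable (σ K) in
/-- The functor of `K(-j)`, the module `K` in degree `j` on which the variables act as zero. -/
noncomputable abbrev trivialModule (j : ℕ) : MonomialCat σ ⥤ ModuleCat.{u} K :=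
  monomialQuotient K (UpperSet.Ioi 0) j

lemma mem_monomialIdeal_Ioi_zero {p : MvPolynomial σ K} :
    p ∈ monomialIdeal K (UpperSet.Ioi 0) ↔ coeff 0 p = 0 := by
  simp only [mem_monomialIdeal, UpperSet.mem_Ioi_iff, pos_iff_ne_zero]
  exact ⟨fun h => not_not.1 fun h0 => h 0 h0 rfl, fun h u hu h0 => hu (h0 ▸ h)⟩

lemma trivialModule_map_eq_zero {j : ℕ} {a b : MonomialCat σ} (m : a ⟶ b) (hm : m.1 ≠ 0) :
    (trivialModule σ K j).map m = 0 := by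
  refine ModuleCat.hom_ext (LinearMap.ext ?_)
  rintro ⟨_, p, -, rfl⟩
  refine Subtype.ext (Ideal.Quotient.eq_zero_iff_mem.2 (mem_monomialIdeal_Ioi_zero.2 ?_))
  exact (coeff_monomial_mul' _ _ _ _).trans (if_neg fun h => hm (nonpos_iff_eq_zero.1 h))

lemma subsingleton_trivialModule_obj {j b : ℕ} (h : b ≠ j) :
    Subsingleton ((trivialModule σ K j).obj ⟨b⟩) := by
  refine subsingleton_of_forall_eq 0 ?_
  rintro ⟨_, p, hp, rfl⟩
  refine Subtype.ext (Ideal.Quotient.eq_zero_iff_mem.2 (mem_monomialIdeal_Ioi_zero.2 ?_))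
  by_contra h0
  exact h (by simpa using (mem_shiftedPiece.1 hp 0 h0).symm)

variable (σ K) in
/-- The constant coefficient, as a map on the quotient by the ideal of the variables. -/
noncomputable def constantCoeffQuotient :
    (MvPolynomial σ K ⧸ monomialIdeal K (UpperSet.Ioi (0 : σ →₀ ℕ))) →ₐ[K] K :=
  Ideal.Quotient.liftₐ _ (aeval 0) fun p hp => by
    rw [aeval_zero]
    exact mem_monomialIdeal_Ioi_zero.1 hp

lemma constantCoeffQuotient_mk (p : MvPolynomial σ K) :
    constantCoeffQuotient σ K (Ideal.Quotient.mk _ p) = coeff 0 p :=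
  aeval_zero p

variable (σ K) in
/-- The graded piece of `K(-j)` in degree `j`, identified with `K` by the constant coefficient. -/
noncomputable def trivialModuleObjEquiv {j b : ℕ} (h : b = j) :
    (trivialModule σ K j).obj ⟨b⟩ ≃ₗ[K] K :=
  LinearEquiv.ofBijective ((constantCoeffQuotient σ K).toLinearMap.domRestrict _) <| by
    refine ⟨(injective_iff_map_eq_zero _).2 ?_, fun c => ?_⟩
    · rintro ⟨_, p, _, rfl⟩ hp
      refine Subtype.ext (Ideal.Quotient.eq_zero_iff_mem.2 (mem_monomialIdeal_Ioi_zero.2 ?_))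
      exact (constantCoeffQuotient_mk p).symm.trans hp
    · have hc : C c ∈ shiftedPiece σ K j b := mem_shiftedPiece.2 fun u hu => by
        classical
        rw [coeff_C] at hu
        split_ifs at hu with hu0
        · simp [← hu0, h]
        · exact absurd rfl hu
      exact ⟨⟨_, C c, hc, rfl⟩, (constantCoeffQuotient_mk (C c)).trans (coeff_zero_C c)⟩

/-- The morphisms from a graded free module to `K(-j)` are the functions on the basis elements of
degree `j`. -/
noncomputable def freeHomTrivialEquiv (deg : ι → ℕ) (j : ℕ) :
    (freeFunctor σ K deg ⟶ trivialModule σ K j) ≃ₗ[K] ({s // deg s = j} → K) :=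
  (freeHomEquiv deg _).trans <| LinearEquiv.ofBijective
    (LinearMap.pi fun s : {s // deg s = j} =>
      (trivialModuleObjEquiv σ K s.2).toLinearMap ∘ₗ LinearMap.proj s.1) <| by
    classical
    refine ⟨fun y z hyz => funext fun s => ?_, fun c => ?_⟩
    · by_cases hs : deg s = j
      · exact (trivialModuleObjEquiv σ K hs).injective (congrFun hyz ⟨s, hs⟩)
      · have := subsingleton_trivialModule_obj (σ := σ) (K := K) hs
        exact Subsingleton.elim _ _
    · use fun s => if hs : deg s = j then (trivialModuleObjEquiv σ K hs).symm (c ⟨s, hs⟩) else 0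
      funext s
      simp [s.2]

end TrivialModules

section Ext

open Abelian

variable {C : Type*} [Category* C] [Abelian C] [HasExt C] {S : ShortComplex C}

lemma subsingleton_ext_X₃ (hS : S.ShortExact) (Y : C) {i : ℕ} (h₂ : Subsingleton (Ext S.X₂ Y i))
    (h₁ : ∀ k, k + 1 = i → Subsingleton (Ext S.X₁ Y k)) : Subsingleton (Ext S.X₃ Y i) := by
  refine subsingleton_of_forall_eq 0 fun x => ?_
  cases i with
  | zero =>
    have := hS.epi_g
    exact Ext.precomp_mk₀_injective_of_epi Y S.g (Subsingleton.elim _ _)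
  | succ k =>
    obtain ⟨y, rfl⟩ := Ext.contravariant_sequence_exact₃ hS Y x (Subsingleton.elim _ _)
      (n₀ := k) (add_comm _ _)
    have := h₁ k rfl
    rw [Subsingleton.elim y 0, Ext.comp_zero]

variable (K : Type*) [CommRing K] [Linear K C]

/-- The connecting homomorphism, as an isomorphism when the neighbouring maps vanish. -/
noncomputable def extConnectingEquiv (hS : S.ShortExact) (Y : C) (i : ℕ)
    (h₁ : ∀ x : Ext S.X₂ Y i, (Ext.mk₀ S.f).comp x (zero_add i) = 0)
    (h₂ : Subsingleton (Ext S.X₂ Y (i + 1))) : Ext S.X₁ Y i ≃ₗ[K] Ext S.X₃ Y (i + 1) :=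
  LinearEquiv.ofBijective
    (Ext.bilinearCompOfLinear K S.X₃ S.X₁ Y 1 i (i + 1) (add_comm _ _) hS.extClass) <| by
    refine ⟨(injective_iff_map_eq_zero _).2 fun x hx => ?_, fun x => ?_⟩
    · obtain ⟨y, rfl⟩ := Ext.contravariant_sequence_exact₁ hS Y x (add_comm _ _) hx
      exact h₁ y
    · exact Ext.contravariant_sequence_exact₃ hS Y x (Subsingleton.elim _ _) (add_comm _ _)

variable {Y : C} (hY : ∀ η : S.X₂ ⟶ Y, S.f ≫ η = 0)

/-- The homomorphisms out of the last term of a short exact sequence, when the homomorphisms out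
of the middle term restrict to zero on the first term. -/
noncomputable def extZeroEquivOfCompEqZero (hS : S.ShortExact) : Ext S.X₃ Y 0 ≃ₗ[K] (S.X₂ ⟶ Y) :=
  Ext.linearEquiv₀.trans <| LinearEquiv.ofBijective (Linear.leftComp K Y S.g) <| by
    have := hS.epi_g
    refine ⟨fun η θ => (cancel_epi S.g).1, fun η => ?_⟩
    obtain ⟨θ, hθ⟩ := Limits.CokernelCofork.IsColimit.desc' hS.gIsCokernel η (hY η)
    exact ⟨θ, hθ⟩

/-- Dimension shifting along a projective middle term, also in degree zero when the homomorphisms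
out of the middle term restrict to zero on the first term. -/
noncomputable def extSuccEquivOfCompEqZero [Projective S.X₂] (hS : S.ShortExact) (k : ℕ) :
    Ext S.X₃ Y (k + 1) ≃ₗ[K] Ext S.X₁ Y k :=
  (extConnectingEquiv K hS Y k
    (fun x => by
      cases k with
      | zero =>
        obtain ⟨η, rfl⟩ := Ext.homEquiv₀.symm.surjective x
        exact (Ext.mk₀_comp_mk₀ S.f η).trans (by rw [hY, Ext.mk₀_zero])
      | succ k =>
        have := Ext.subsingleton_of_projective S.X₂ Y k
        rw [Subsingleton.elim x 0, Ext.comp_zero])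
    (Ext.subsingleton_of_projective S.X₂ Y k)).symm

end Ext

section BettiNumbers

open Abelian

variable {σ K : Type u} [CommRing K]

noncomputable instance : HasExt.{u + 1} (MonomialCat σ ⥤ ModuleCat.{u} K) := HasExt.standard _

variable (K) in
/-- The graded Betti numbers `β_{i,t}` of the quotient by the monomials with exponent in `U`
vanish for `(i, t)` outside of `S`. They are encoded as the ranks of the graded `Ext` groups into
`K(-t)`. The internal shift by `a` makes the notion stable under colon sequences. -/
def BettiSupportedIn (U : UpperSet (σ →₀ ℕ)) (S : ℕ → ℕ → Prop) : Prop :=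
  ∀ a i j, (∀ t, j = a + t → ¬ S i t) →
    Subsingleton (Ext (monomialQuotient K U a) (trivialModule σ K j) i)

variable (K) in
/-- The graded Betti number `β_{i,t}` of the quotient by the monomials with exponent in `U`
is `r`. -/
def HasBettiNumber (U : UpperSet (σ →₀ ℕ)) (i t r : ℕ) : Prop :=
  ∀ a, Module.finrank K (Ext (monomialQuotient K U a) (trivialModule σ K (a + t)) i) = r

section Top

variable (σ K) in
/-- The projection from the free module of rank one onto the quotient by the zero ideal. -/
noncomputable def freeToQuotientTop (a : ℕ) :
    freeFunctor σ K (fun _ : PUnit => a) ⟶ monomialQuotient K (⊤ : UpperSet (σ →₀ ℕ)) a :=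
  MonomialGrading.map (φ := Submodule.mkQ _ ∘ₗ Finsupp.lapply PUnit.unit) fun _ f hf =>
    ⟨f PUnit.unit, mem_shiftedPiece.2 (mem_freeGrading.1 hf PUnit.unit), rfl⟩

instance isIso_freeToQuotientTop (a : ℕ) : IsIso (freeToQuotientTop σ K a) := by
  refine (NatTrans.isIso_iff_isIso_app _).2 fun b =>
    (ConcreteCategory.isIso_iff_bijective _).2
      ⟨(injective_iff_map_eq_zero ((freeToQuotientTop σ K a).app b).hom).2 ?_, ?_⟩
  · rintro ⟨f, hf⟩ hfb
    have hmem : f PUnit.unit ∈ monomialIdeal K (⊤ : UpperSet (σ →₀ ℕ)) :=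
      Ideal.Quotient.eq_zero_iff_mem.1 (congrArg Subtype.val hfb)
    refine Subtype.ext (Finsupp.ext fun _ => MvPolynomial.ext _ _ fun u => ?_)
    exact not_not.1 fun hu => UpperSet.notMem_top (mem_monomialIdeal.1 hmem u hu)
  · rintro ⟨_, p, hp, rfl⟩
    refine ⟨⟨Finsupp.single PUnit.unit p, mem_freeGrading.2 fun _ => ?_⟩, Subtype.ext ?_⟩
    · simpa using mem_shiftedPiece.1 hp
    · exact congrArg (Ideal.Quotient.mk _) Finsupp.single_eq_same

instance projective_monomialQuotient_top (a : ℕ) :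
    Projective (monomialQuotient K (⊤ : UpperSet (σ →₀ ℕ)) a) :=
  Projective.of_iso (asIso (freeToQuotientTop σ K a)) inferInstance

variable (σ K) in
/-- `Ext⁰` from `K[σ](-a)`, the quotient by the zero ideal, to `K(-j)`: one copy of `K` if `a = j`,
zero otherwise. -/
noncomputable def extZeroTopEquiv (a j : ℕ) :
    Ext (monomialQuotient K (⊤ : UpperSet (σ →₀ ℕ)) a) (trivialModule σ K j) 0 ≃ₗ[K]
      ({_s : PUnit.{u + 1} // a = j} → K) :=
  Ext.linearEquiv₀.trans <|
    (Linear.homCongr K (asIso (freeToQuotientTop σ K a)) (Iso.refl _)).symm.trans <|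
      freeHomTrivialEquiv _ j

lemma bettiSupportedIn_top :
    BettiSupportedIn K (⊤ : UpperSet (σ →₀ ℕ)) fun i t => i = 0 ∧ t = 0 := by
  intro a i j hj
  cases i with
  | succ i => exact Ext.subsingleton_of_projective _ _ _
  | zero =>
    have : IsEmpty {_s : PUnit.{u + 1} // a = j} := ⟨fun s => hj 0 s.2.symm ⟨rfl, rfl⟩⟩
    exact (extZeroTopEquiv σ K a j).toEquiv.subsingleton

lemma hasBettiNumber_top [Nontrivial K] :
    HasBettiNumber K (⊤ : UpperSet (σ →₀ ℕ)) 0 0 1 := by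
  intro a
  rw [(extZeroTopEquiv σ K a (a + 0)).finrank_eq, Module.finrank_fintype_fun_eq_card,
    Fintype.card_eq_one_iff]
  exact ⟨⟨PUnit.unit, rfl⟩, fun _ => rfl⟩

end Top

variable {U : UpperSet (σ →₀ ℕ)} {m : σ →₀ ℕ}

lemma BettiSupportedIn.mono {S T : ℕ → ℕ → Prop} (hU : BettiSupportedIn K U S)
    (hST : ∀ i t, S i t → T i t) : BettiSupportedIn K U T :=
  fun a i j hj => hU a i j fun t ht hSt => hj t ht (hST i t hSt)

lemma BettiSupportedIn.inf_Ici {S S' T : ℕ → ℕ → Prop} {d : ℕ} (hU : BettiSupportedIn K U S)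
    (hcolon : BettiSupportedIn K (colonExponents U m) S') (hm : m.degree = d)
    (hST : ∀ i t, S i t → T i t) (hST' : ∀ i t, S' i t → T (i + 1) (t + d)) :
    BettiSupportedIn K (U ⊓ UpperSet.Ici m) T := by
  intro a i j hj
  refine subsingleton_ext_X₃ (shortExact_colonSequence (K := K) (U := U) (m := m) (a := a)) _
    (hU.mono hST a i j hj) ?_
  rintro k rfl
  exact hcolon _ k j fun t ht hSt => hj (t + d) (by omega) (hST' k t hSt)

lemma HasBettiNumber.inf_Ici {S : ℕ → ℕ → Prop} {i t r d : ℕ}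
    (hcolon : HasBettiNumber K (colonExponents U m) i t r) (hU : BettiSupportedIn K U S)
    (hm : m.degree = d) (hS : ¬ S i (t + d)) (hS' : ¬ S (i + 1) (t + d)) :
    HasBettiNumber K (U ⊓ UpperSet.Ici m) (i + 1) (t + d) r := by
  intro a
  have hvanish : ∀ k, ¬ S k (t + d) → Subsingleton
      (Ext (monomialQuotient K U a) (trivialModule σ K (a + (t + d))) k) :=
    fun k hk => hU a k _ fun s hs => add_left_cancel hs ▸ hk
  have := hvanish i hS
  have δ := extConnectingEquiv K (shortExact_colonSequence (K := K) (U := U) (m := m) (a := a))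
    (trivialModule σ K (a + (t + d))) i
    (fun x => by rw [Subsingleton.elim x 0, Ext.comp_zero]) (hvanish (i + 1) hS')
  rw [← δ.finrank_eq, add_comm t, ← add_assoc, ← hm]
  exact hcolon (a + m.degree)

end BettiNumbers

section Edges

variable {σ : Type u}

/-- The exponent of the monomial `x * y`, for variables `x` and `y`. -/
noncomputable def edgeExponent (x y : σ) : σ →₀ ℕ := Finsupp.single x 1 + Finsupp.single y 1

lemma degree_edgeExponent (x y : σ) : (edgeExponent x y).degree = 2 := by
  simp [edgeExponent]

lemma single_one_le_iff {x : σ} {u : σ →₀ ℕ} : Finsupp.single x 1 ≤ u ↔ u x ≠ 0 := by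
  rw [Finsupp.single_le_iff, Nat.one_le_iff_ne_zero]

lemma edgeExponent_le_iff {x y : σ} (hxy : x ≠ y) {u : σ →₀ ℕ} :
    edgeExponent x y ≤ u ↔ u x ≠ 0 ∧ u y ≠ 0 := by
  classical
  refine ⟨fun h => ⟨?_, ?_⟩, fun h z => ?_⟩
  · exact single_one_le_iff.1 (le_self_add.trans h)
  · exact single_one_le_iff.1 (le_add_self.trans h)
  · simp only [edgeExponent, Finsupp.add_apply, Finsupp.single_apply]
    grind

lemma edgeExponent_add_apply_ne_zero {x y z : σ} {u : σ →₀ ℕ} :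
    (edgeExponent x y + u) z ≠ 0 ↔ x = z ∨ y = z ∨ u z ≠ 0 := by
  classical
  simp only [edgeExponent, Finsupp.add_apply, Finsupp.single_apply]
  grind

lemma colonExponents_Ici_single {x y : σ} (hxy : x ≠ y) :
    colonExponents (UpperSet.Ici (Finsupp.single y 1)) (Finsupp.single x 1) =
      UpperSet.Ici (Finsupp.single y 1) := by
  ext u
  simp [colonExponents, Finsupp.single_eq_of_ne hxy.symm]

lemma colonExponents_inf (U V : UpperSet (σ →₀ ℕ)) (m : σ →₀ ℕ) :
    colonExponents (U ⊓ V) m = colonExponents U m ⊓ colonExponents V m := rfl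

lemma colonExponents_top (m : σ →₀ ℕ) : colonExponents ⊤ m = ⊤ := by
  ext u
  simp [colonExponents]

/-- The exponents of the monomials in the edge ideal of the path `v 0, …, v (M - 1)`. -/
def pathExponents (v : ℕ → σ) (M : ℕ) : UpperSet (σ →₀ ℕ) where
  carrier := {u | ∃ i, i + 1 < M ∧ u (v i) ≠ 0 ∧ u (v (i + 1)) ≠ 0}
  upper' := by
    rintro u w huw ⟨i, hi, hu, hu'⟩
    exact ⟨i, hi, (hu.bot_lt.trans_le (huw _)).ne', (hu'.bot_lt.trans_le (huw _)).ne'⟩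

variable {v : ℕ → σ} {M : ℕ} {u : σ →₀ ℕ}

lemma mem_pathExponents :
    u ∈ pathExponents v M ↔ ∃ i, i + 1 < M ∧ u (v i) ≠ 0 ∧ u (v (i + 1)) ≠ 0 := Iff.rfl

lemma pathExponents_eq_top (hM : M < 2) : pathExponents v M = ⊤ := by
  ext u
  simp only [SetLike.mem_coe, mem_pathExponents, UpperSet.notMem_top, iff_false]
  rintro ⟨i, hi, -⟩
  omega

lemma pathExponents_succ (hv : Set.InjOn v (Set.Iio (M + 2))) :
    pathExponents v (M + 2) =
      pathExponents v (M + 1) ⊓ UpperSet.Ici (edgeExponent (v M) (v (M + 1))) := by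
  have hne : v M ≠ v (M + 1) := hv.ne (by simp) (by simp) (by simp)
  ext u
  simp only [SetLike.mem_coe, UpperSet.mem_inf_iff, UpperSet.mem_Ici_iff, edgeExponent_le_iff hne,
    mem_pathExponents]
  constructor
  · rintro ⟨i, hi, hu⟩
    obtain hlt | rfl : i < M ∨ i = M := by omega
    · exact Or.inl ⟨i, by omega, hu⟩
    · exact Or.inr hu
  · rintro (⟨i, hi, hu⟩ | hu)
    · exact ⟨i, by omega, hu⟩
    · exact ⟨M, by omega, hu⟩

lemma colonExponents_pathExponents_single {x : σ} (hx : ∀ i < M, v i ≠ x) :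
    colonExponents (pathExponents v M) (Finsupp.single x 1) = pathExponents v M := by
  ext u
  refine exists_congr fun i => and_congr_right fun hi => ?_
  simp only [Finsupp.add_apply, Finsupp.single_eq_of_ne (hx _ hi), zero_add,
    Finsupp.single_eq_of_ne (hx i (by omega))]

lemma colonExponents_pathExponents_next (hv : Set.InjOn v (Set.Iio (M + 3))) :
    colonExponents (pathExponents v (M + 2)) (edgeExponent (v (M + 1)) (v (M + 2))) =
      pathExponents v M ⊓ UpperSet.Ici (Finsupp.single (v M) 1) := by
  ext u
  have hinj : ∀ {i j}, i < M + 3 → j < M + 3 → (v i = v j ↔ i = j) := fun hi hj => hv.eq_iff hi hj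
  simp only [SetLike.mem_coe, UpperSet.mem_inf_iff, UpperSet.mem_Ici_iff, mem_colonExponents,
    single_one_le_iff, mem_pathExponents, edgeExponent_add_apply_ne_zero]
  grind

lemma colonExponents_pathExponents_ends (hv : Set.InjOn v (Set.Iio (M + 4))) :
    colonExponents (pathExponents v (M + 4)) (edgeExponent (v 0) (v (M + 3))) =
      pathExponents (fun i => v (i + 2)) M ⊓ UpperSet.Ici (Finsupp.single (v 1) 1) ⊓
        UpperSet.Ici (Finsupp.single (v (M + 2)) 1) := by
  ext u
  have hinj : ∀ {i j}, i < M + 4 → j < M + 4 → (v i = v j ↔ i = j) := fun hi hj => hv.eq_iff hi hj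
  simp only [SetLike.mem_coe, UpperSet.mem_inf_iff, UpperSet.mem_Ici_iff, mem_colonExponents,
    single_one_le_iff, mem_pathExponents, edgeExponent_add_apply_ne_zero]
  constructor
  · rintro ⟨_ | _ | i, hi⟩ <;> grind
  · grind

end Edges

section Paths

variable {σ K : Type u} [CommRing K] {U : UpperSet (σ →₀ ℕ)} {x : σ} {v : ℕ → σ}

lemma BettiSupportedIn.inf_Ici_single {S T : ℕ → ℕ → Prop} (hU : BettiSupportedIn K U S)
    (hx : colonExponents U (Finsupp.single x 1) = U)
    (hST : ∀ i t, S i t → T i t ∧ T (i + 1) (t + 1)) :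
    BettiSupportedIn K (U ⊓ UpperSet.Ici (Finsupp.single x 1)) T :=
  hU.inf_Ici (hx.symm ▸ hU) (Finsupp.degree_single x 1) (fun i t h => (hST i t h).1)
    fun i t h => (hST i t h).2

lemma HasBettiNumber.inf_Ici_single {S : ℕ → ℕ → Prop} {i t r : ℕ}
    (hr : HasBettiNumber K U i t r) (hU : BettiSupportedIn K U S)
    (hx : colonExponents U (Finsupp.single x 1) = U) (hS : ¬ S i (t + 1))
    (hS' : ¬ S (i + 1) (t + 1)) :
    HasBettiNumber K (U ⊓ UpperSet.Ici (Finsupp.single x 1)) (i + 1) (t + 1) r :=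
  HasBettiNumber.inf_Ici (hx.symm ▸ hr) hU (Finsupp.degree_single x 1) hS hS'

/-- A region of positions `(i, t)` containing those of the nonzero graded Betti numbers `β_{i,t}`
of a path on `M` vertices. -/
def PathBettiRegion (M i t : ℕ) : Prop :=
  3 * i ≤ 2 * t ∧ t ≤ M ∧ 3 * t ≤ M + 1 + 3 * i

lemma bettiSupportedIn_pathExponents_of_lt_two {M : ℕ} (hM : M < 2) (N : ℕ) :
    BettiSupportedIn K (pathExponents v M) (PathBettiRegion N) := by
  rw [pathExponents_eq_top hM]
  refine bettiSupportedIn_top.mono ?_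
  rintro _ _ ⟨rfl, rfl⟩
  simp [PathBettiRegion]

lemma bettiSupportedIn_pathExponents_two (hv : Set.InjOn v (Set.Iio 2)) :
    BettiSupportedIn K (pathExponents v 2) (PathBettiRegion 2) := by
  rw [pathExponents_succ hv]
  refine (bettiSupportedIn_pathExponents_of_lt_two (by simp) 2).inf_Ici
    (S' := fun i t => i = 0 ∧ t = 0) ?_ (degree_edgeExponent _ _) (fun _ _ => id) ?_
  · rw [pathExponents_eq_top (by simp), colonExponents_top]
    exact bettiSupportedIn_top
  · rintro _ _ ⟨rfl, rfl⟩
    simp [PathBettiRegion]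

lemma colonExponents_pathExponents_vertex {M : ℕ} (hv : Set.InjOn v (Set.Iio (M + 1))) :
    colonExponents (pathExponents v M) (Finsupp.single (v M) 1) = pathExponents v M :=
  colonExponents_pathExponents_single fun i hi =>
    hv.ne (Set.mem_Iio.2 (by omega)) (Set.mem_Iio.2 (by omega)) hi.ne

variable (K) in
theorem bettiSupportedIn_pathExponents {M : ℕ} (hv : Set.InjOn v (Set.Iio M)) :
    BettiSupportedIn K (pathExponents v M) (PathBettiRegion M) := by
  induction M using Nat.strong_induction_on with
  | _ M ih =>
    match M, hv with
    | 0, _ => exact bettiSupportedIn_pathExponents_of_lt_two (by simp) 0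
    | 1, _ => exact bettiSupportedIn_pathExponents_of_lt_two (by simp) 1
    | 2, hv => exact bettiSupportedIn_pathExponents_two hv
    | M + 3, hv =>
      have hle : ∀ N ≤ M + 3, Set.InjOn v (Set.Iio N) := fun N hN =>
        hv.mono (Set.Iio_subset_Iio hN)
      have hcolon := (ih M (by omega) (hle _ (by omega))).inf_Ici_single
        (T := fun i t => PathBettiRegion (M + 3) (i + 1) (t + 2))
        (colonExponents_pathExponents_vertex (hle _ (by omega))) fun i t h => by
          simp only [PathBettiRegion] at h ⊢
          omega
      rw [← colonExponents_pathExponents_next hv] at hcolon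
      rw [pathExponents_succ hv]
      refine (ih (M + 2) (by omega) (hle _ (by omega))).inf_Ici hcolon
        (degree_edgeExponent _ _) (fun i t h => ?_) fun _ _ => id
      simp only [PathBettiRegion] at h ⊢
      omega

variable (K) in
theorem hasBettiNumber_pathExponents [Nontrivial K] {k : ℕ} (hv : Set.InjOn v (Set.Iio (3 * k))) :
    HasBettiNumber K (pathExponents v (3 * k)) (2 * k) (3 * k) 1 := by
  induction k with
  | zero =>
    rw [pathExponents_eq_top (by simp)]
    exact hasBettiNumber_top
  | succ k ih =>
    have hle : ∀ N ≤ 3 * (k + 1), Set.InjOn v (Set.Iio N) := fun N hN =>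
      hv.mono (Set.Iio_subset_Iio hN)
    have hcolon := (ih (hle _ (by omega))).inf_Ici_single
      (bettiSupportedIn_pathExponents K (hle _ (by omega)))
      (colonExponents_pathExponents_vertex (hle _ (by omega)))
      (by simp only [PathBettiRegion]; omega) (by simp only [PathBettiRegion]; omega)
    rw [← colonExponents_pathExponents_next (M := 3 * k) hv] at hcolon
    have hedge := HasBettiNumber.inf_Ici hcolon
      (bettiSupportedIn_pathExponents K (hle (3 * k + 2) (by omega))) (degree_edgeExponent _ _)
      (by simp only [PathBettiRegion]; omega)
      (by simp only [PathBettiRegion]; omega)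
    rwa [← pathExponents_succ (M := 3 * k + 1) hv] at hedge

end Paths

section Cycles

variable {σ K : Type u} [CommRing K] {v : ℕ → σ} {k : ℕ}

lemma colonExponents_interior_single {M : ℕ} (hv : Set.InjOn v (Set.Iio (M + 4))) {x : ℕ}
    (hx : x ∈ ({1, M + 2} : Set ℕ)) :
    colonExponents (pathExponents (fun i => v (i + 2)) M) (Finsupp.single (v x) 1) =
      pathExponents (fun i => v (i + 2)) M := by
  refine colonExponents_pathExponents_single fun i hi => hv.ne ?_ ?_ ?_ <;>
    simp only [Set.mem_insert_iff, Set.mem_singleton_iff, Set.mem_Iio] at * <;> omega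

lemma colonExponents_interior_inf_single {M : ℕ} (hv : Set.InjOn v (Set.Iio (M + 4))) :
    colonExponents (pathExponents (fun i => v (i + 2)) M ⊓ UpperSet.Ici (Finsupp.single (v 1) 1))
      (Finsupp.single (v (M + 2)) 1) =
        pathExponents (fun i => v (i + 2)) M ⊓ UpperSet.Ici (Finsupp.single (v 1) 1) := by
  rw [colonExponents_inf, colonExponents_interior_single hv (by simp),
    colonExponents_Ici_single (hv.ne (by simp) (by simp) (by simp))]

lemma injOn_interior {M : ℕ} (hv : Set.InjOn v (Set.Iio (M + 4))) :
    Set.InjOn (fun i => v (i + 2)) (Set.Iio M) :=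
  hv.comp (add_left_injective 2).injOn fun i hi => by
    rw [Set.mem_Iio] at hi ⊢
    omega

variable (K) in
lemma bettiSupportedIn_interior_inf_single (hv : Set.InjOn v (Set.Iio (3 * k + 4))) :
    BettiSupportedIn K
      (pathExponents (fun i => v (i + 2)) (3 * k) ⊓ UpperSet.Ici (Finsupp.single (v 1) 1))
      fun i t => t ≤ 3 * k + 1 ∧ 3 * i ≤ 2 * t + 1 :=
  (bettiSupportedIn_pathExponents K (injOn_interior hv)).inf_Ici_single
    (colonExponents_interior_single hv (by simp)) fun i t h => by
      simp only [PathBettiRegion] at h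
      omega

variable (K) in
lemma bettiSupportedIn_colonExponents_ends (hv : Set.InjOn v (Set.Iio (3 * k + 4))) :
    BettiSupportedIn K
      (colonExponents (pathExponents v (3 * k + 4)) (edgeExponent (v 0) (v (3 * k + 3))))
      fun i _ => i ≤ 2 * k + 2 := by
  rw [colonExponents_pathExponents_ends hv]
  exact (bettiSupportedIn_interior_inf_single K hv).inf_Ici_single
    (colonExponents_interior_inf_single hv) fun i t h => by omega

variable (K) in
lemma hasBettiNumber_colonExponents_ends [Nontrivial K] (hv : Set.InjOn v (Set.Iio (3 * k + 4))) :
    HasBettiNumber K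
      (colonExponents (pathExponents v (3 * k + 4)) (edgeExponent (v 0) (v (3 * k + 3))))
      (2 * k + 2) (3 * k + 2) 1 := by
  rw [colonExponents_pathExponents_ends hv]
  have hinterior := (hasBettiNumber_pathExponents K (injOn_interior hv)).inf_Ici_single
    (bettiSupportedIn_pathExponents K (injOn_interior hv))
    (colonExponents_interior_single hv (x := 1) (by simp))
    (by simp only [PathBettiRegion]; omega) (by simp only [PathBettiRegion]; omega)
  exact hinterior.inf_Ici_single (bettiSupportedIn_interior_inf_single K hv)
    (colonExponents_interior_inf_single hv) (by omega) (by omega)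

/-- The exponents of the monomials in the edge ideal of the `n`-cycle. -/
def cycleExponents (n : ℕ) : UpperSet (ZMod n →₀ ℕ) where
  carrier := {u | ∃ i, u i ≠ 0 ∧ u (i + 1) ≠ 0}
  upper' := by
    rintro u w huw ⟨i, hu, hu'⟩
    exact ⟨i, (hu.bot_lt.trans_le (huw _)).ne', (hu'.bot_lt.trans_le (huw _)).ne'⟩

lemma mem_cycleExponents {n : ℕ} {u : ZMod n →₀ ℕ} :
    u ∈ cycleExponents n ↔ ∃ i, u i ≠ 0 ∧ u (i + 1) ≠ 0 := Iff.rfl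

lemma cycleIdeal_eq_monomialIdeal (K : Type) [Field K] {n : ℕ} (hn : 2 ≤ n) :
    cycleIdeal K n = monomialIdeal K (cycleExponents n) := by
  have : Fact (1 < n) := ⟨hn⟩
  have hspan : cycleIdeal K n = Ideal.span ((fun u : ZMod n →₀ ℕ => monomial u (1 : K)) ''
      Set.range fun i : ZMod n => edgeExponent i (i + 1)) := by
    rw [cycleIdeal, ← Set.range_comp]
    congr 2
    funext i
    simp [X, monomial_mul, edgeExponent]
  have hne : ∀ i : ZMod n, i ≠ i + 1 := fun i h => one_ne_zero (left_eq_add.1 h)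
  ext p
  rw [hspan, mem_ideal_span_monomial_image, mem_monomialIdeal]
  simp only [mem_support_iff, Set.mem_range, exists_exists_eq_and, edgeExponent_le_iff (hne _),
    mem_cycleExponents]

lemma cycleExponents_eq (M : ℕ) : cycleExponents (M + 4) =
    pathExponents Nat.cast (M + 4) ⊓
      UpperSet.Ici (edgeExponent (Nat.cast 0) (Nat.cast (M + 3))) := by
  have hlast : ((M + 3 : ℕ) : ZMod (M + 4)) + 1 = (0 : ℕ) := by
    rw [Nat.cast_zero, ← ZMod.natCast_self (M + 4)]
    push_cast
    ring
  have hne : ((0 : ℕ) : ZMod (M + 4)) ≠ (M + 3 : ℕ) :=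
    (CharP.natCast_injOn_Iio (ZMod (M + 4)) (M + 4)).ne (by simp) (by simp) (by simp)
  ext u
  simp only [SetLike.mem_coe, UpperSet.mem_inf_iff, UpperSet.mem_Ici_iff, mem_cycleExponents,
    mem_pathExponents, edgeExponent_le_iff hne]
  constructor
  · rintro ⟨i, hi⟩
    obtain ⟨j, hj, rfl⟩ : ∃ j < M + 4, (j : ZMod (M + 4)) = i :=
      ⟨i.val, ZMod.val_lt i, ZMod.natCast_zmod_val i⟩
    obtain hlt | rfl : j + 1 < M + 4 ∨ j = M + 3 := by omega
    · exact Or.inl ⟨j, hlt, by exact_mod_cast hi⟩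
    · rw [hlast] at hi
      exact Or.inr hi.symm
  · rintro (⟨i, -, hi⟩ | hends)
    · exact ⟨i, by exact_mod_cast hi⟩
    · exact ⟨_, hends.2, hlast ▸ hends.1⟩

theorem bettiSupportedIn_cycleExponents (K : Type) [CommRing K] (k : ℕ) :
    BettiSupportedIn K (cycleExponents (3 * k + 4)) fun i _ => i ≤ 2 * k + 3 := by
  have hv := CharP.natCast_injOn_Iio (ZMod (3 * k + 4)) (3 * k + 4)
  rw [cycleExponents_eq]
  refine (bettiSupportedIn_pathExponents K hv).inf_Ici (bettiSupportedIn_colonExponents_ends K hv)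
    (degree_edgeExponent _ _) (fun i t h => ?_) fun i _ h => by omega
  simp only [PathBettiRegion] at h
  omega

theorem hasBettiNumber_cycleExponents (K : Type) [CommRing K] [Nontrivial K] (k : ℕ) :
    HasBettiNumber K (cycleExponents (3 * k + 4)) (2 * k + 3) (3 * k + 4) 1 := by
  have hv := CharP.natCast_injOn_Iio (ZMod (3 * k + 4)) (3 * k + 4)
  rw [cycleExponents_eq]
  exact (hasBettiNumber_colonExponents_ends K hv).inf_Ici (d := 2)
    (bettiSupportedIn_pathExponents K hv) (degree_edgeExponent _ _)
    (by simp only [PathBettiRegion]; omega) (by simp only [PathBettiRegion]; omega)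

end Cycles

section HomogeneousLifts

variable {σ K : Type u} [CommRing K]

lemma exists_mem_piece_of_mem_range {M N : Type u} [AddCommGroup M] [Module K M]
    [Module (MvPolynomial σ K) M] [IsScalarTower K (MvPolynomial σ K) M] [AddCommGroup N]
    [Module K N] [Module (MvPolynomial σ K) N] [IsScalarTower K (MvPolynomial σ K) N]
    {G : MonomialGrading σ K M} {H : MonomialGrading σ K N} {φ : M →ₗ[MvPolynomial σ K] N}
    (hG : ⨆ b, G.piece b = ⊤) (hH : iSupIndep H.piece) (hφ : G.IsGradedHom H φ) {b : ℕ} {y : N}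
    (hy : y ∈ H.piece b) (hrange : y ∈ LinearMap.range φ) : ∃ x ∈ G.piece b, φ x = y := by
  obtain ⟨x, rfl⟩ := hrange
  have hx : x ∈ G.piece b ⊔ ⨆ (c) (_ : c ≠ b), G.piece c := by
    rw [← iSup_split_single, hG]
    trivial
  obtain ⟨z, hz, w, hw, rfl⟩ := Submodule.mem_sup.1 hx
  have hle : ⨆ (c) (_ : c ≠ b), G.piece c ≤
      (⨆ (c) (_ : c ≠ b), H.piece c).comap (φ.restrictScalars K) :=
    iSup₂_le fun c hc x hx => Submodule.mem_iSup_of_mem c (Submodule.mem_iSup_of_mem hc (hφ hx))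
  have hφw : φ w ∈ H.piece b := by simpa using sub_mem hy (hφ hz)
  refine ⟨z, hz, ?_⟩
  rw [map_add, Submodule.disjoint_def.1 (hH b) _ hφw (hle hw), add_zero]

lemma iSup_piece_freeGrading {ι : Type u} (deg : ι → ℕ) :
    ⨆ b, (freeGrading σ K deg).piece b = ⊤ := by
  refine top_le_iff.1 ((monomialBasis σ K ι).span_eq.ge.trans (Submodule.span_le.2 ?_))
  rintro _ ⟨q, rfl⟩
  exact Submodule.mem_iSup_of_mem _ (Submodule.subset_span ⟨q, rfl, rfl⟩)

lemma iSupIndep_piece_freeGrading {ι : Type u} (deg : ι → ℕ) :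
    iSupIndep (freeGrading σ K deg).piece := by
  intro b
  nontriviality K
  refine ((monomialBasis σ K ι).linearIndependent.disjoint_span_image
    (disjoint_compl_right (a := monomialsOfDegree σ deg b))).mono_right
      (iSup₂_le fun c hc => Submodule.span_mono (Set.image_mono ?_))
  rintro q rfl
  exact hc

lemma iSupIndep_piece_quotientGrading (U : UpperSet (σ →₀ ℕ)) (a : ℕ) :
    iSupIndep (quotientGrading (monomialIdeal K U) a).piece := by
  intro b
  have hle : ⨆ (c) (_ : c ≠ b), (quotientGrading (monomialIdeal K U) a).piece c ≤
      (restrictSupport K {u | a + u.degree ≠ b}).map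
        (Ideal.Quotient.mkₐ K (monomialIdeal K U)).toLinearMap :=
    iSup₂_le fun c hc => Submodule.map_mono <| restrictSupport_mono K fun u hu =>
      (Eq.trans_ne hu hc :)
  refine Submodule.disjoint_def.2 ?_
  rintro _ ⟨p, hp, rfl⟩ hpb
  obtain ⟨q, hq, hqp⟩ := hle hpb
  have hsub : q - p ∈ monomialIdeal K U := Ideal.Quotient.eq.1 hqp
  refine Ideal.Quotient.eq_zero_iff_mem.2 (mem_monomialIdeal.2 fun u hu => ?_)
  have hqu : coeff u q = 0 := by
    by_contra hqu
    exact hq (mem_support_iff.2 hqu) (mem_shiftedPiece.1 hp u hu)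
  exact mem_monomialIdeal.1 hsub u (by rwa [coeff_sub, hqu, zero_sub, neg_ne_zero])

end HomogeneousLifts

section Subgradings

namespace MonomialGrading

variable {σ K M N : Type u} [CommRing K] [AddCommGroup M] [Module K M]
  [Module (MvPolynomial σ K) M] [IsScalarTower K (MvPolynomial σ K) M] [AddCommGroup N]
  [Module K N] [Module (MvPolynomial σ K) N] [IsScalarTower K (MvPolynomial σ K) N]

/-- The grading of a submodule `L`, encoded as a grading of the ambient module whose pieces are
the homogeneous elements of `L`. -/
noncomputable def subgrading (G : MonomialGrading σ K M) (L : Submodule (MvPolynomial σ K) M) :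
    MonomialGrading σ K M where
  piece b := G.piece b ⊓ L.restrictScalars K
  smul_mem u _ hx h := ⟨G.smul_mem u hx.1 h, L.smul_mem _ hx.2⟩

variable {G : MonomialGrading σ K M} {H : MonomialGrading σ K N} {φ : M →ₗ[MvPolynomial σ K] N}
  {L : Submodule (MvPolynomial σ K) M}

lemma isGradedHom_id_subgrading : (G.subgrading L).IsGradedHom G LinearMap.id :=
  fun _ _ hx => hx.1

variable (G L) in
/-- The inclusion of a submodule. -/
noncomputable def subgradingι : (G.subgrading L).functor ⟶ G.functor :=
  map isGradedHom_id_subgrading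

lemma subgradingι_comp_map (hφ : G.IsGradedHom H φ) (hL : LinearMap.ker φ = L) :
    G.subgradingι L ≫ map hφ = 0 := by
  ext b x
  exact Subtype.ext (hL.ge x.2.2)

lemma shortExact_subgrading (hφ : G.IsGradedHom H φ) (hL : LinearMap.ker φ = L)
    (surjective : ∀ b, ∀ y ∈ H.piece b, ∃ x ∈ G.piece b, φ x = y) :
    (ShortComplex.mk _ _ (subgradingι_comp_map hφ hL)).ShortExact :=
  shortExact_shortComplex isGradedHom_id_subgrading hφ (fun _ _ hx => hL.ge hx.2)
    (fun _ _ _ hx => hx) (fun _ y hy hφy => ⟨y, ⟨hy, hL.le hφy⟩, rfl⟩) surjective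

end MonomialGrading

end Subgradings

section HomogeneousElements

variable {K : Type} [Field K] {n : ℕ}

lemma isHomogeneous_iff_degree_eq {σ R : Type*} [CommSemiring R] {p : MvPolynomial σ R} {d : ℕ} :
    p.IsHomogeneous d ↔ ∀ u, coeff u p ≠ 0 → u.degree = d :=
  forall_congr' fun u => by rw [Finsupp.degree_eq_weight_one]; rfl

lemma isHomogElem_iff {b : ℕ → ℕ} {d : ℕ} {f : GradedFreeMod K n b} :
    IsHomogElem d f ↔ f ∈ (freeGrading (ZMod n) K Sigma.fst).piece d := by
  rw [mem_freeGrading]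
  refine forall_congr' fun s => ?_
  rw [isHomogeneous_iff_degree_eq]
  constructor
  · rintro ⟨hdeg, hle⟩ u hu
    rw [hdeg u hu, Nat.add_sub_cancel' (hle fun h => hu (by rw [h, coeff_zero]))]
  · refine fun h => ⟨fun u hu => (Nat.sub_eq_of_eq_add' (h u hu).symm).symm, fun hs => ?_⟩
    obtain ⟨u, hu⟩ := exists_coeff_ne_zero hs
    exact (Nat.le_add_right _ _).trans_eq (h u hu)

lemma coeff_zero_of_mem_irrelevantIdeal {p : MvPolynomial (ZMod n) K}
    (hp : p ∈ irrelevantIdeal K n) : coeff 0 p = 0 :=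
  (mem_pow_idealOfVars_iff' 1 p).1 (by rwa [pow_one]) 0 (by simp)

lemma coeff_zero_of_mem_irrelevantIdeal_smul_top {ι : Type} {f : ι →₀ MvPolynomial (ZMod n) K}
    (hf : f ∈ irrelevantIdeal K n •
      (⊤ : Submodule (MvPolynomial (ZMod n) K) (ι →₀ MvPolynomial (ZMod n) K))) (s : ι) :
    coeff 0 (f s) = 0 := by
  have hle : irrelevantIdeal K n • (⊤ : Submodule (MvPolynomial (ZMod n) K)
      (ι →₀ MvPolynomial (ZMod n) K)) ≤
        Submodule.comap (Finsupp.lapply s) (irrelevantIdeal K n) :=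
    Submodule.smul_le.2 fun r hr g _ => Ideal.mul_mem_right _ _ hr
  exact coeff_zero_of_mem_irrelevantIdeal (hle hf)

end HomogeneousElements

/-- The graded module `⨁ⱼ R(-j)^(b j)`, as a functor. -/
noncomputable abbrev gradedFreeModFunctor (K : Type) [Field K] (n : ℕ) (b : ℕ → ℕ) :
    MonomialCat (ZMod n) ⥤ ModuleCat.{0} K :=
  freeFunctor (ZMod n) K (Sigma.fst : (Σ j, Fin (b j)) → ℕ)

namespace MinimalGradedFreeResolution

open Abelian

variable {K : Type} [Field K] {n : ℕ} {U : UpperSet (ZMod n →₀ ℕ)} {β : ℕ → ℕ → ℕ}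
  (res : MinimalGradedFreeResolution K n (monomialIdeal K U) β)

lemma isGradedHom_d (i : ℕ) :
    (freeGrading (ZMod n) K Sigma.fst).IsGradedHom (freeGrading (ZMod n) K Sigma.fst) (res.d i) :=
  fun b x hx => isHomogElem_iff.1 (res.graded i b x (isHomogElem_iff.2 hx))

lemma isGradedHom_aug : (freeGrading (ZMod n) K Sigma.fst).IsGradedHom
    (quotientGrading (monomialIdeal K U) 0) res.aug := by
  intro b x hx
  obtain ⟨p, hp, hpx⟩ := res.aug_graded b x (isHomogElem_iff.2 hx)
  refine ⟨p, mem_shiftedPiece.2 fun u hu => ?_, hpx.symm⟩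
  rw [zero_add, isHomogeneous_iff_degree_eq.1 hp u hu]

/-- The grading of the image of the `i`-th differential. -/
noncomputable abbrev rangeGrading (i : ℕ) : MonomialGrading (ZMod n) K (GradedFreeMod K n (β i)) :=
  (freeGrading (ZMod n) K Sigma.fst).subgrading (LinearMap.range (res.d i))

lemma isGradedHom_d_rangeGrading (i : ℕ) :
    (freeGrading (ZMod n) K Sigma.fst).IsGradedHom (res.rangeGrading i) (res.d i) :=
  fun _ x hx => ⟨res.isGradedHom_d i hx, x, rfl⟩

/-- The functors of the syzygy modules, the zeroth one being the resolved module. -/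
noncomputable def syzygy : ℕ → MonomialCat (ZMod n) ⥤ ModuleCat.{0} K
  | 0 => monomialQuotient K U 0
  | i + 1 => (res.rangeGrading i).functor

/-- The projection of the `i`-th term of the resolution onto the `i`-th syzygy module. -/
noncomputable def syzygyπ : ∀ i, gradedFreeModFunctor K n (β i) ⟶ res.syzygy i
  | 0 => MonomialGrading.map res.isGradedHom_aug
  | i + 1 => MonomialGrading.map (res.isGradedHom_d_rangeGrading i)

/-- The inclusion of the next syzygy module into the `i`-th term of the resolution. -/
noncomputable def syzygyι (i : ℕ) : res.syzygy (i + 1) ⟶ gradedFreeModFunctor K n (β i) :=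
  MonomialGrading.subgradingι _ _

lemma syzygyι_comp_syzygyπ : ∀ i, res.syzygyι i ≫ res.syzygyπ i = 0
  | 0 => MonomialGrading.subgradingι_comp_map res.isGradedHom_aug res.exact_at_zero
  | i + 1 => MonomialGrading.subgradingι_comp_map (res.isGradedHom_d_rangeGrading i) (res.exact i)

lemma shortExact_syzygy (i : ℕ) :
    (ShortComplex.mk _ _ (res.syzygyι_comp_syzygyπ i)).ShortExact := by
  cases i with
  | zero =>
    exact MonomialGrading.shortExact_subgrading res.isGradedHom_aug res.exact_at_zero fun b y hy =>
      exists_mem_piece_of_mem_range (iSup_piece_freeGrading _) (iSupIndep_piece_quotientGrading U 0)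
        res.isGradedHom_aug hy (res.aug_surjective y)
  | succ i =>
    exact MonomialGrading.shortExact_subgrading (res.isGradedHom_d_rangeGrading i) (res.exact i)
      fun b y hy => exists_mem_piece_of_mem_range (iSup_piece_freeGrading _)
        (iSupIndep_piece_freeGrading _) (res.isGradedHom_d i) hy.1 hy.2

lemma syzygyι_comp_eq_zero {i j : ℕ}
    (η : gradedFreeModFunctor K n (β i) ⟶ trivialModule (ZMod n) K j) :
    res.syzygyι i ≫ η = 0 := by
  ext b x
  exact app_eq_zero_of_coeff_zero (x := ⟨x.1, x.2.1⟩) η (fun _ _ => trivialModule_map_eq_zero)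
    (coeff_zero_of_mem_irrelevantIdeal_smul_top (res.minimal i x.2.2))

lemma finrank_ext_syzygy (k i j : ℕ) :
    Module.finrank K (Ext (res.syzygy i) (trivialModule (ZMod n) K j) k) = β (i + k) j := by
  induction k generalizing i with
  | zero =>
    have : Fintype {s : Σ j, Fin (β i j) // s.1 = j} := .ofEquiv _ (Equiv.sigmaSubtype j).symm
    rw [((extZeroEquivOfCompEqZero K res.syzygyι_comp_eq_zero (res.shortExact_syzygy i)).trans
      (freeHomTrivialEquiv _ j)).finrank_eq, Module.finrank_fintype_fun_eq_card,
      Fintype.card_congr (Equiv.sigmaSubtype j), Fintype.card_fin, add_zero]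
  | succ k ih =>
    rw [(extSuccEquivOfCompEqZero K res.syzygyι_comp_eq_zero
      (res.shortExact_syzygy i) k).finrank_eq, ih, add_right_comm, add_assoc]

lemma finrank_ext_eq (res : MinimalGradedFreeResolution K n (monomialIdeal K U) β) (i j : ℕ) :
    Module.finrank K (Ext (monomialQuotient K U 0) (trivialModule (ZMod n) K j) i) = β i j :=
  (res.finrank_ext_syzygy i 0 j).trans (by rw [zero_add])

end MinimalGradedFreeResolution

section ProjectiveResolutions

lemma chainComplexOf_d {C : Type*} [Category* C] [Limits.HasZeroMorphisms C] {X : ℕ → C}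
    {d : ∀ i, X (i + 1) ⟶ X i} (hd : ∀ i, d (i + 1) ≫ d i = 0) (i : ℕ) :
    (ChainComplex.of X d hd).d (i + 1) i = d i :=
  ChainComplex.of_d X d i

variable {C : Type*} [Category* C] [Abelian C] {X : ℕ → C} {Z : C} {d : ∀ i, X (i + 1) ⟶ X i}
  (hd : ∀ i, d (i + 1) ≫ d i = 0) {ε : X 0 ⟶ Z}

lemma exactAt_succ_chainComplexOf {i : ℕ} (hexact : (ShortComplex.mk _ _ (hd i)).Exact) :
    (ChainComplex.of X d hd).ExactAt (i + 1) := by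
  rw [HomologicalComplex.exactAt_iff' _ (i + 1 + 1) (i + 1) i (by simp) (by simp)]
  have hcomm (j : ℕ) : 𝟙 (X (j + 1)) ≫ d j = (ChainComplex.of X d hd).d (j + 1) j ≫ 𝟙 (X j) := by
    rw [Category.id_comp, chainComplexOf_d hd]
    exact (Category.comp_id _).symm
  exact (ShortComplex.exact_iff_of_iso
    (S₁ := (ChainComplex.of X d hd).sc' (i + 1 + 1) (i + 1) i)
    (S₂ := ShortComplex.mk _ _ (hd i))
    (ShortComplex.isoMk (Iso.refl _) (Iso.refl _) (Iso.refl _) (hcomm (i + 1)) (hcomm i))).2 hexact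

/-- The chain map to a complex concentrated in degree zero given by an augmentation. -/
noncomputable def chainComplexOfAugmentation (hε : d 0 ≫ ε = 0) :
    ChainComplex.of X d hd ⟶ (ChainComplex.single₀ C).obj Z :=
  (ChainComplex.toSingle₀Equiv _ _).symm
    ⟨ε, (congrArg (· ≫ ε) (chainComplexOf_d hd 0)).trans hε⟩

lemma quasiIso_chainComplexOfAugmentation [Epi ε] (hε : d 0 ≫ ε = 0)
    (hexact : ∀ i, (ShortComplex.mk _ _ (hd i)).Exact)
    (hexact₀ : (ShortComplex.mk _ _ hε).Exact) :
    QuasiIso (chainComplexOfAugmentation hd hε) where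
  quasiIsoAt
    | 0 => by
      rw [ChainComplex.quasiIsoAt₀_iff, ShortComplex.quasiIso_iff_of_zeros' _ rfl rfl rfl]
      refine (ShortComplex.exact_and_epi_g_iff_of_iso (S₂ := ShortComplex.mk _ _ hε) ?_).2
        ⟨hexact₀, inferInstance⟩
      have hd₀ := chainComplexOf_d hd 0
      have hε₀ : (chainComplexOfAugmentation hd hε).f 0 = ε :=
        ChainComplex.toSingle₀Equiv_symm_apply_f_zero (C := ChainComplex.of X d hd) ε _
      exact ShortComplex.isoMk (Iso.refl _) (Iso.refl _) (Iso.refl _)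
        ((Category.id_comp _).trans (hd₀.symm.trans (Category.comp_id _).symm))
        ((Category.id_comp _).trans (hε₀.symm.trans (Category.comp_id _).symm))
    | i + 1 => by
      rw [quasiIsoAt_iff_exactAt' _ _ (ChainComplex.exactAt_succ_single_obj _ _)]
      exact exactAt_succ_chainComplexOf hd (hexact i)

/-- The projective resolution given by an exact sequence of projective objects. -/
noncomputable def projectiveResolutionOfExact [∀ i, Projective (X i)] [Epi ε] (hε : d 0 ≫ ε = 0)
    (hexact : ∀ i, (ShortComplex.mk _ _ (hd i)).Exact)
    (hexact₀ : (ShortComplex.mk _ _ hε).Exact) : ProjectiveResolution Z where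
  complex := ChainComplex.of X d hd
  projective i := inferInstanceAs (Projective (X i))
  π := chainComplexOfAugmentation hd hε
  quasiIso := quasiIso_chainComplexOfAugmentation hd hε hexact hexact₀

end ProjectiveResolutions

section DerivedExt

variable {R : Type u} [CommRing R] {Z : ModuleCat.{u} R} (P : ProjectiveResolution Z)
  {Y : ModuleCat.{u} R} {i : ℕ}

lemma subsingleton_ext_iff_exactAt :
    Subsingleton (((Ext R (ModuleCat R) i).obj (Opposite.op Z)).obj Y) ↔
      (P.complex.linearYonedaObj R Y).ExactAt i := by
  rw [HomologicalComplex.exactAt_iff_isZero_homology, ← (P.isoExt i Y).isZero_iff,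
    ModuleCat.isZero_iff_subsingleton]

lemma subsingleton_ext_of_isZero (hP : Limits.IsZero (P.complex.X i)) :
    Subsingleton (((Ext R (ModuleCat R) i).obj (Opposite.op Z)).obj Y) := by
  rw [subsingleton_ext_iff_exactAt P, HomologicalComplex.exactAt_iff]
  refine ShortComplex.exact_of_isZero_X₂ _ ?_
  exact ModuleCat.isZero_of_iff_subsingleton.2 ⟨hP.eq_of_src⟩

lemma exists_d_comp_eq_of_subsingleton_ext
    (hExt : Subsingleton (((Ext R (ModuleCat R) (i + 1)).obj (Opposite.op Z)).obj Y))
    {f : P.complex.X (i + 1) ⟶ Y} (hf : P.complex.d (i + 2) (i + 1) ≫ f = 0) :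
    ∃ g : P.complex.X i ⟶ Y, P.complex.d (i + 1) i ≫ g = f := by
  rw [subsingleton_ext_iff_exactAt P, HomologicalComplex.exactAt_iff' _ i (i + 1) (i + 2)
    (by simp) (by simp), ShortComplex.moduleCat_exact_iff] at hExt
  exact hExt f hf

end DerivedExt

section ProjectiveDimension

lemma eq_zero_of_mem_smul_top {R M : Type*} [CommRing R] [AddCommGroup M] [Module R M]
    {I : Ideal R} (φ : M →ₗ[R] R ⧸ I) {x : M} (hx : x ∈ I • (⊤ : Submodule R M)) : φ x = 0 := by
  refine (Submodule.smul_le.2 fun r hr y _ => ?_ : I • (⊤ : Submodule R M) ≤ LinearMap.ker φ) hx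
  obtain ⟨p, hp⟩ := Ideal.Quotient.mk_surjective (φ y)
  rw [LinearMap.mem_ker, map_smul, ← hp]
  exact Ideal.Quotient.eq_zero_iff_mem.2 (Ideal.mul_mem_right p _ hr)

namespace MinimalGradedFreeResolution

variable {K : Type} [Field K] {n : ℕ} {I : Ideal (MvPolynomial (ZMod n) K)} {β : ℕ → ℕ → ℕ}
  (res : MinimalGradedFreeResolution K n I β)

lemma ofHom_d_comp_ofHom_d (i : ℕ) :
    ModuleCat.ofHom (res.d (i + 1)) ≫ ModuleCat.ofHom (res.d i) = 0 :=
  ModuleCat.hom_ext (LinearMap.exact_iff.2 (res.exact i)).linearMap_comp_eq_zero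

lemma ofHom_d_comp_ofHom_aug : ModuleCat.ofHom (res.d 0) ≫ ModuleCat.ofHom res.aug = 0 :=
  ModuleCat.hom_ext (LinearMap.exact_iff.2 res.exact_at_zero).linearMap_comp_eq_zero

/-- The underlying ungraded projective resolution. -/
noncomputable def projectiveResolution :
    ProjectiveResolution (ModuleCat.of (MvPolynomial (ZMod n) K) (MvPolynomial (ZMod n) K ⧸ I)) :=
  have : Epi (ModuleCat.ofHom res.aug) := (ModuleCat.epi_iff_surjective _).2 res.aug_surjective
  have (i : ℕ) : Projective (ModuleCat.of (MvPolynomial (ZMod n) K) (GradedFreeMod K n (β i))) :=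
    ModuleCat.projective_of_free Finsupp.basisSingleOne
  projectiveResolutionOfExact (X := fun i => ModuleCat.of _ (GradedFreeMod K n (β i)))
    (d := fun i => ModuleCat.ofHom (res.d i)) (ε := ModuleCat.ofHom res.aug)
    res.ofHom_d_comp_ofHom_d res.ofHom_d_comp_ofHom_aug
    (fun i => (ShortComplex.moduleCat_exact_iff _).2 fun _ hx => (res.exact i).le hx)
    ((ShortComplex.moduleCat_exact_iff _).2 fun _ hx => res.exact_at_zero.le hx)

lemma projectiveResolution_d (i : ℕ) :
    res.projectiveResolution.complex.d (i + 1) i = ModuleCat.ofHom (res.d i) :=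
  chainComplexOf_d (X := fun i => ModuleCat.of _ (GradedFreeMod K n (β i)))
    (d := fun i => ModuleCat.ofHom (res.d i)) res.ofHom_d_comp_ofHom_d i

lemma projectiveResolution_d_comp_eq_zero (i : ℕ) (g : res.projectiveResolution.complex.X i ⟶
    ModuleCat.of _ (MvPolynomial (ZMod n) K ⧸ irrelevantIdeal K n)) :
    res.projectiveResolution.complex.d (i + 1) i ≫ g = 0 := by
  rw [projectiveResolution_d]
  exact ModuleCat.hom_ext (LinearMap.ext fun x => eq_zero_of_mem_smul_top
    (M := GradedFreeMod K n (β i)) g.hom (res.minimal i ⟨x, rfl⟩))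

lemma projDim_le (res : MinimalGradedFreeResolution K n I β) {d : ℕ}
    (hβ : ∀ i > d, ∀ j, β i j = 0) :
    projDim (MvPolynomial (ZMod n) K) (MvPolynomial (ZMod n) K ⧸ I) ≤ d := by
  refine sInf_le fun i hi N => subsingleton_ext_of_isZero res.projectiveResolution ?_
  have : IsEmpty (Σ j, Fin (β i j)) :=
    ⟨fun s => Fin.elim0 (hβ i (Nat.cast_lt.1 hi) s.1 ▸ s.2)⟩
  exact ModuleCat.isZero_of_iff_subsingleton.2
    (inferInstanceAs (Subsingleton (GradedFreeMod K n (β i))))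

lemma le_projDim (res : MinimalGradedFreeResolution K n I β) {i j : ℕ} (hβ : β i j ≠ 0) :
    i ≤ projDim (MvPolynomial (ZMod n) K) (MvPolynomial (ZMod n) K ⧸ I) := by
  cases i with
  | zero => exact zero_le
  | succ i =>
    refine le_sInf fun e he => not_lt.1 fun hlt => ?_
    let s : Σ j, Fin (β (i + 1) j) := ⟨j, 0, Nat.pos_of_ne_zero hβ⟩
    let f : GradedFreeMod K n (β (i + 1)) →ₗ[MvPolynomial (ZMod n) K]
        MvPolynomial (ZMod n) K ⧸ irrelevantIdeal K n :=
      Submodule.mkQ (irrelevantIdeal K n) ∘ₗ Finsupp.lapply s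
    obtain ⟨g, hg⟩ := exists_d_comp_eq_of_subsingleton_ext res.projectiveResolution
      (he (i + 1) hlt _) (res.projectiveResolution_d_comp_eq_zero (i + 1) (ModuleCat.ofHom f))
    have hf : ModuleCat.ofHom f = 0 :=
      hg.symm.trans (res.projectiveResolution_d_comp_eq_zero i g)
    have hfs : Submodule.Quotient.mk (p := irrelevantIdeal K n) (Finsupp.single s 1 s) = 0 :=
      congrArg (fun g => g.hom (Finsupp.single s 1)) hf
    rw [Finsupp.single_eq_same] at hfs
    exact one_ne_zero ((coeff_zero_one).symm.trans
      (coeff_zero_of_mem_irrelevantIdeal (Ideal.Quotient.eq_zero_iff_mem.1 hfs)))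

end MinimalGradedFreeResolution

end ProjectiveDimension

/-- For `n ≡ 1 (mod 3)`, `n ≥ 4`: the graded Betti number `β_{(2n+1)/3, n}` of `R/I(Cₙ)`
(read off any minimal graded free resolution) equals `1`, and the projective dimension of
`R/I(Cₙ)` equals `(2n+1)/3`. -/
theorem cycle_top_betti_one_mod_three (K : Type) [Field K] (n : ℕ) (hn : 4 ≤ n)
    (h3 : n % 3 = 1) (β : ℕ → ℕ → ℕ)
    (res : MinimalGradedFreeResolution K n (cycleIdeal K n) β) :
    β ((2 * n + 1) / 3) n = 1 ∧
      projDim (MvPolynomial (ZMod n) K) (MvPolynomial (ZMod n) K ⧸ cycleIdeal K n) =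
        (((2 * n + 1) / 3 : ℕ) : ℕ∞) := by
  obtain ⟨k, rfl⟩ : ∃ k, n = 3 * k + 4 := ⟨(n - 4) / 3, by omega⟩
  rw [show (2 * (3 * k + 4) + 1) / 3 = 2 * k + 3 by omega]
  revert res
  rw [cycleIdeal_eq_monomialIdeal K (by omega)]
  intro res
  have htop : β (2 * k + 3) (3 * k + 4) = 1 := by
    rw [← res.finrank_ext_eq, ← hasBettiNumber_cycleExponents K k 0, zero_add]
  have hvanish : ∀ i > 2 * k + 3, ∀ j, β i j = 0 := by
    intro i hi j
    have := bettiSupportedIn_cycleExponents K k 0 i j fun _ _ => by omega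
    rw [← res.finrank_ext_eq, Module.finrank_zero_of_subsingleton]
  exact ⟨htop, le_antisymm (res.projDim_le hvanish) (res.le_projDim (htop ▸ one_ne_zero))⟩
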